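/- Let u be a non-negative strong solution to problem (Incl) with initial condition u_τ ∈ H. Then ∂u/∂t − ∂²u/∂x² ≥ 0 for almost all t > τ and almost all x ∈ (0,1); consequently ∂u/∂t − ∂²u/∂x² ≥ 0 also holds in the sense of distributions. -/

import Mathlib

open MeasureTheory Set

noncomputable section

/-- Lebesgue measure restricted to the spatial interval `(0,1)`. -/
def μ01 : Measure ℝ := volume.restrict (Ioo (0:ℝ) 1)

/-- `H = L²(0,1)`. -/
abbrev Hsp : Type := Lp ℝ 2 μ01

/-- The Heaviside multifunction. -/
def heaviside (s : ℝ) : Set ℝ :=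
  if s < 0 then {-1} else if s = 0 then Icc (-1) 1 else {1}

/-- Condition (Cond1). -/
structure Cond1 (b ω : ℝ → ℝ) (b0 b1 ω0 ω1 : ℝ) : Prop where
  contb : Continuous b
  contω : Continuous ω
  b0pos : 0 < b0
  blb : ∀ t, b0 ≤ b t
  bub : ∀ t, b t ≤ b1
  ω0nonneg : 0 ≤ ω0
  ωlb : ∀ t, ω0 ≤ ω t
  ωub : ∀ t, ω t ≤ ω1

/-- `v ∈ H²(0,1) ∩ H¹₀(0,1)` with (weak) second derivative `w ∈ L²(0,1)`:
`v` has a representative that is continuous on `[0,1]`, vanishes at the boundary,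
is differentiable on `(0,1)` and whose derivative is an antiderivative of `w`. -/
def InDomainA (v w : Hsp) : Prop :=
  ∃ vt : ℝ → ℝ, ContinuousOn vt (Icc 0 1) ∧ vt 0 = 0 ∧ vt 1 = 0 ∧
    (∀ᵐ x ∂μ01, vt x = v x) ∧
    ∃ g : ℝ → ℝ,
      (∀ x ∈ Ioo (0:ℝ) 1, HasDerivAt vt (g x) x) ∧
      ∀ x ∈ Ioo (0:ℝ) 1, ∀ y ∈ Ioo (0:ℝ) 1, g x - g y = ∫ z in y..x, w z

/-- A strong solution of the inclusion on `[τ,∞)`, with explicit data: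
`r` is the `L²`-selection, `u'` the time derivative, `uxx` the second spatial derivative. -/
structure IsStrongSolutionWith (b ω : ℝ → ℝ) (τ : ℝ) (u r u' uxx : ℝ → Hsp) : Prop where
  cont : ContinuousOn u (Ici τ)
  rmem : ∀ T, τ < T → MemLp r 2 (volume.restrict (Ioo τ T))
  sel : ∀ᵐ t ∂(volume.restrict (Ioi τ)), ∀ᵐ x ∂μ01,
      ∃ h ∈ heaviside (u t x), r t x = b t * h + ω t * u t x
  dom : ∀ᵐ t ∂(volume.restrict (Ioi τ)), InDomainA (u t) (uxx t)
  eq : ∀ᵐ t ∂(volume.restrict (Ioi τ)), u' t = r t + uxx t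
  fund : ∀ T1 T2 : ℝ, τ < T1 → T1 < T2 →
      IntervalIntegrable u' volume T1 T2 ∧
      ∀ t ∈ Icc T1 T2, u t = u T1 + ∫ s in T1..t, u' s

/-- The solution is non-negative on `[τ,∞)`. -/
def NonnegOn (u : ℝ → Hsp) (τ : ℝ) : Prop :=
  ∀ t, τ ≤ t → ∀ᵐ x ∂μ01, 0 ≤ u t x

open Filter Topology

instance instFiniteMu01 : IsFiniteMeasure μ01 := by unfold μ01; infer_instance

lemma intervalIntegrable_Hsp (w : Hsp) {a b : ℝ} (ha : 0 ≤ a) (hab : a ≤ b) (hb : b ≤ 1) :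
    IntervalIntegrable (w : ℝ → ℝ) volume a b := by
  have h : Integrable (w : ℝ → ℝ) μ01 := (Lp.memLp w).integrable (by norm_num)
  rw [intervalIntegrable_iff_integrableOn_Ioo_of_le hab]
  exact IntegrableOn.mono_set (t := Ioo 0 1) h (Ioo_subset_Ioo ha hb)

lemma g_hasDerivAt (w : Hsp) (g : ℝ → ℝ)
    (hg : ∀ x ∈ Ioo (0:ℝ) 1, ∀ y ∈ Ioo (0:ℝ) 1, g x - g y = ∫ z in y..x, w z) :
    ∀ᵐ x ∂μ01, HasDerivAt g (w x) x := by
  have h := (intervalIntegrable_Hsp w le_rfl zero_le_one le_rfl).ae_hasDerivAt_integral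
  unfold μ01
  rw [ae_restrict_iff' measurableSet_Ioo]
  filter_upwards [h] with x hx hx01
  have hh : (1/2:ℝ) ∈ Ioo (0:ℝ) 1 := by constructor <;> norm_num
  have h1 := hx (by rw [uIcc_of_le zero_le_one]; exact Ioo_subset_Icc_self hx01) (1/2)
    (by rw [uIcc_of_le zero_le_one]; exact Ioo_subset_Icc_self hh)
  have h2 := h1.add_const (g (1/2))
  refine h2.congr_of_eventuallyEq ?_
  filter_upwards [Ioo_mem_nhds hx01.1 hx01.2] with y hy
  rw [← hg y hy (1/2) hh]; ring

lemma uxx_zero (v w : Hsp) (h : InDomainA v w) (hv : ∀ᵐ x ∂μ01, 0 ≤ v x) :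
    ∀ᵐ x ∂μ01, v x = 0 → w x = 0 := by
  obtain ⟨vt, hc, -, -, hae, g, hd, hg⟩ := h
  have hcI : ContinuousOn vt (Ioo 0 1) := hc.mono Ioo_subset_Icc_self
  have hnn : EqOn vt (fun x => |vt x|) (Ioo 0 1) := by
    refine Measure.eqOn_open_of_ae_eq (μ := volume) ?_ isOpen_Ioo hcI hcI.abs
    change ∀ᵐ x ∂μ01, vt x = |vt x|
    filter_upwards [hae, hv] with x h1 h2
    rw [h1, abs_of_nonneg h2]
  set Z : Set ℝ := {x | x ∈ Ioo (0:ℝ) 1 ∧ vt x = 0} with hZ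
  have hgZ : ∀ x ∈ Z, g x = 0 := by
    intro x hx
    refine IsLocalMin.hasDerivAt_eq_zero ?_ (hd x hx.1)
    filter_upwards [Ioo_mem_nhds hx.1.1 hx.1.2] with y hy
    rw [hx.2, hnn hy]; exact abs_nonneg _
  have hcount : ({x ∈ Z | 𝓝[Z ∩ Ioi x] x = ⊥}).Countable :=
    countable_setOfPred_isolated_right_within
  have hiso : ∀ᵐ x ∂μ01, x ∉ {x ∈ Z | 𝓝[Z ∩ Ioi x] x = ⊥} :=
    ae_restrict_of_ae (hcount.ae_notMem volume)
  have hmem : ∀ᵐ x ∂μ01, x ∈ Ioo (0:ℝ) 1 := ae_restrict_mem measurableSet_Ioo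
  filter_upwards [hae, hiso, hmem, g_hasDerivAt w g hg] with x h1 h2 h3 h4 h5
  have hxZ : x ∈ Z := ⟨h3, by rw [h1, h5]⟩
  have hne : (𝓝[Z ∩ Ioi x] x).NeBot := ⟨fun hb => h2 ⟨hxZ, hb⟩⟩
  have hu : UniqueDiffWithinAt ℝ Z x := by
    rw [uniqueDiffWithinAt_iff_accPt, accPt_principal_iff_nhdsWithin]
    refine hne.mono (nhdsWithin_mono _ ?_)
    rintro y ⟨hy, hxy⟩
    exact ⟨hy, ne_of_gt hxy⟩
  refine UniqueDiffWithinAt.eq_deriv Z hu (h4.hasDerivWithinAt) ?_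
  exact (hasDerivWithinAt_const x Z (0:ℝ)).congr (fun y hy => hgZ y hy) (hgZ x hxZ)

lemma u_hasDerivAt {u u' : ℝ → Hsp} {τ : ℝ}
    (fund : ∀ T1 T2 : ℝ, τ < T1 → T1 < T2 →
      IntervalIntegrable u' volume T1 T2 ∧
      ∀ t ∈ Icc T1 T2, u t = u T1 + ∫ s in T1..t, u' s) :
    ∀ᵐ t ∂(volume.restrict (Ioi τ)), HasDerivAt u (u' t) t := by
  rw [ae_restrict_iff' measurableSet_Ioi]
  have key : ∀ n : ℕ, ∀ᵐ t, t ∈ Ioo (τ + 1/((n:ℝ)+1)) (τ + n + 2) → HasDerivAt u (u' t) t := by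
    intro n
    have hn : (0:ℝ) < 1/((n:ℝ)+1) := by positivity
    have hn1 : 1/((n:ℝ)+1) ≤ 1 := by
      rw [div_le_one (by positivity)]; linarith [(Nat.cast_nonneg n : (0:ℝ) ≤ n)]
    have hlt : τ + 1/((n:ℝ)+1) < τ + n + 2 := by linarith [(Nat.cast_nonneg n : (0:ℝ) ≤ n)]
    obtain ⟨hi, hf⟩ := fund (τ + 1/((n:ℝ)+1)) (τ + n + 2) (by linarith) hlt
    filter_upwards [hi.ae_hasDerivAt_integral] with t ht htm
    have h1 := ht (by rw [uIcc_of_le hlt.le]; exact Ioo_subset_Icc_self htm) _ left_mem_uIcc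
    refine (h1.const_add (u (τ + 1/((n:ℝ)+1)))).congr_of_eventuallyEq ?_
    filter_upwards [Ioo_mem_nhds htm.1 htm.2] with y hy
    exact hf y (Ioo_subset_Icc_self hy)
  filter_upwards [ae_all_iff.2 key] with t ht htτ
  have htτ' : 0 < t - τ := sub_pos.2 htτ
  obtain ⟨n, hn⟩ := exists_nat_one_div_lt htτ'
  obtain ⟨m, hm⟩ := exists_nat_gt (t - τ)
  refine ht (max n m) ⟨?_, ?_⟩
  · have : 1/(((max n m : ℕ):ℝ)+1) ≤ 1/((n:ℝ)+1) := by
      apply one_div_le_one_div_of_le (by positivity)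
      have : (n:ℝ) ≤ ((max n m : ℕ):ℝ) := by exact_mod_cast le_max_left _ _
      linarith
    linarith
  · have : (m:ℝ) ≤ ((max n m : ℕ):ℝ) := by exact_mod_cast le_max_right _ _
    linarith

lemma u'_nonneg {u : ℝ → Hsp} {d : Hsp} {τ t : ℝ} (ht : τ < t) (hd : HasDerivAt u d t)
    (hnneg : NonnegOn u τ) : ∀ᵐ x ∂μ01, u t x = 0 → 0 ≤ d x := by
  have h1 : Tendsto (slope u t) (𝓝[>] t) (𝓝 d) :=
    (hasDerivAt_iff_tendsto_slope_left_right.1 hd).2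
  obtain ⟨ns, hns, hlim⟩ := (tendstoInMeasure_of_tendsto_Lp h1).exists_seq_tendsto_ae'
  have hmem : ∀ᶠ n in atTop, t < ns n := hns.eventually self_mem_nhdsWithin
  have hall : ∀ n, ∀ᵐ x ∂μ01, t < ns n → u t x = 0 → 0 ≤ slope u t (ns n) x := by
    intro n
    by_cases hn : t < ns n
    · have e1 : slope u t (ns n) = (ns n - t)⁻¹ • (u (ns n) - u t) := by
        simp [slope_def_module]
      rw [e1]
      filter_upwards [Lp.coeFn_smul (ns n - t)⁻¹ (u (ns n) - u t), Lp.coeFn_sub (u (ns n)) (u t),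
        hnneg (ns n) (by linarith)] with x a1 a2 a3 _ a4
      rw [a1, Pi.smul_apply, a2, Pi.sub_apply, a4, sub_zero, smul_eq_mul]
      exact mul_nonneg (inv_nonneg.2 (by linarith)) a3
    · exact Eventually.of_forall fun x h => absurd h hn
  filter_upwards [hlim, ae_all_iff.2 hall] with x hx1 hx2 hx3
  exact ge_of_tendsto hx1 (hmem.mono fun n hn => hx2 n hn hx3)

lemma r_nonneg {b ω : ℝ → ℝ} {b0 b1 ω0 ω1 τ : ℝ} (hC : Cond1 b ω b0 b1 ω0 ω1)
    {u r u' uxx : ℝ → Hsp}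
    (hsol : IsStrongSolutionWith b ω τ u r u' uxx) (hnneg : NonnegOn u τ) :
    ∀ᵐ t ∂(volume.restrict (Ioi τ)), ∀ᵐ x ∂μ01, 0 ≤ r t x := by
  filter_upwards [hsol.sel, hsol.dom, hsol.eq, u_hasDerivAt hsol.fund,
    ae_restrict_mem measurableSet_Ioi] with t h1 h2 h3 h4 ht
  have hn := hnneg t (le_of_lt ht)
  have hadd := Lp.coeFn_add (r t) (uxx t)
  rw [← h3] at hadd
  filter_upwards [h1, hn, uxx_zero _ _ h2 hn, u'_nonneg ht h4 hnneg, hadd] with x a1 a2 a3 a4 a5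
  rcases a2.lt_or_eq with hp | hz
  · obtain ⟨h, hh, he⟩ := a1
    rw [heaviside, if_neg (not_lt.2 a2), if_neg hp.ne'] at hh
    rw [mem_singleton_iff] at hh
    have := hC.b0pos.trans_le (hC.blb t)
    have := hC.ω0nonneg.trans (hC.ωlb t)
    rw [he, hh]; positivity
  · have := a4 hz.symm
    rw [a5, Pi.add_apply, a3 hz.symm] at this
    linarith

lemma sub_int {F : Type*} [NormedAddCommGroup F] {q : ℝ → F} {a b : ℝ} (hab : a < b)
    (hq : IntervalIntegrable q volume a b) (s : ℝ) (hs : s ∈ Icc a b) (t : ℝ) (ht : t ∈ Icc a b) :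
    IntervalIntegrable q volume s t := by
  refine hq.mono_set ?_
  rw [uIcc_of_le hab.le]
  exact uIcc_subset_Icc hs ht

lemma ibp {E : Type*} [NormedAddCommGroup E] [InnerProductSpace ℝ E] [CompleteSpace E]
    {U f Φ Φ' : ℝ → E} {a b : ℝ} (hab : a < b)
    (hf : IntervalIntegrable f volume a b)
    (hU : ∀ t ∈ Icc a b, U t = U a + ∫ s in a..t, f s)
    (hΦ : ∀ t, HasDerivAt Φ (Φ' t) t) (hΦ' : Continuous Φ')
    (ha : Φ a = 0) (hb : Φ b = 0) :
    IntervalIntegrable (fun t => inner ℝ (U t) (Φ' t) + inner ℝ (f t) (Φ t)) volume a b ∧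
    ∫ t in a..b, (inner ℝ (U t) (Φ' t) + inner ℝ (f t) (Φ t)) = 0 := by
  have hUc : ContinuousOn U (Icc a b) := by
    have h1 := intervalIntegral.continuousOn_primitive_interval' hf left_mem_uIcc
    rw [uIcc_of_le hab.le] at h1
    exact (continuousOn_const.add h1).congr hU
  have hΦc : Continuous Φ := continuous_iff_continuousAt.2 fun t => (hΦ t).continuousAt
  obtain ⟨CU, hCU⟩ := isCompact_Icc.exists_bound_of_continuousOn hUc
  obtain ⟨C0, hC0⟩ := isCompact_Icc.exists_bound_of_continuousOn (hΦc.continuousOn (s := Icc a b))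
  obtain ⟨C1, hC1⟩ := isCompact_Icc.exists_bound_of_continuousOn (hΦ'.continuousOn (s := Icc a b))
  have haI : a ∈ Icc a b := left_mem_Icc.2 hab.le
  have hCU0 : 0 ≤ CU := (norm_nonneg _).trans (hCU a haI)
  have hC00 : 0 ≤ C0 := (norm_nonneg _).trans (hC0 a haI)
  have hC10 : 0 ≤ C1 := (norm_nonneg _).trans (hC1 a haI)
  set G : ℝ → ℝ := fun s => C0 * ‖f s‖ + CU * C1 with hG
  have hGi : IntervalIntegrable G volume a b :=
    (hf.norm.const_mul C0).add intervalIntegrable_const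
  have hHac := hGi.absolutelyContinuousOnInterval_intervalIntegral (c := a) left_mem_uIcc
  -- the key estimate for ordered points
  have est0 : ∀ s ∈ Icc a b, ∀ t ∈ Icc a b, s ≤ t →
      dist (inner ℝ (U s) (Φ s)) (inner ℝ (U t) (Φ t)) ≤
        dist (∫ v in a..s, G v) (∫ v in a..t, G v) := by
    intro s hs t ht hst
    have e1 : ‖U t - U s‖ ≤ ∫ v in s..t, ‖f v‖ := by
      rw [hU t ht, hU s hs, add_sub_add_left_eq_sub,
        intervalIntegral.integral_interval_sub_left (sub_int hab hf a haI t ht) (sub_int hab hf a haI s hs)]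
      exact intervalIntegral.norm_integral_le_integral_norm hst
    have e2 : ‖Φ t - Φ s‖ ≤ C1 * (t - s) := by
      have := Convex.norm_image_sub_le_of_norm_hasDerivWithin_le
        (fun x _ => (hΦ x).hasDerivWithinAt) hC1 (convex_Icc a b) hs ht
      rwa [Real.norm_of_nonneg (sub_nonneg.2 hst)] at this
    have e3 : ∫ v in s..t, G v = C0 * (∫ v in s..t, ‖f v‖) + CU * C1 * (t - s) := by
      rw [hG, intervalIntegral.integral_add
        ((sub_int hab hf s hs t ht).norm.const_mul C0) intervalIntegrable_const,
        intervalIntegral.integral_const_mul, intervalIntegral.integral_const, smul_eq_mul]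
      ring
    have e4 : inner ℝ (U t) (Φ t) - inner ℝ (U s) (Φ s)
        = inner ℝ (U t - U s) (Φ t) + inner ℝ (U s) (Φ t - Φ s) := by
      rw [inner_sub_left, inner_sub_right]; ring
    rw [dist_comm, dist_comm (∫ v in a..s, G v), Real.dist_eq, Real.dist_eq,
      intervalIntegral.integral_interval_sub_left (sub_int hab hGi a haI t ht) (sub_int hab hGi a haI s hs),
      e4]
    refine le_trans ?_ (le_abs_self _)
    rw [e3]
    refine (abs_add_le _ _).trans (add_le_add ?_ ?_)
    · refine (abs_real_inner_le_norm _ _).trans ?_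
      rw [mul_comm C0]
      exact mul_le_mul e1 (hC0 t ht) (norm_nonneg _) ((norm_nonneg _).trans e1)
    · refine (abs_real_inner_le_norm _ _).trans ?_
      rw [mul_assoc]
      exact mul_le_mul (hCU s hs) e2 (norm_nonneg _) hCU0
  have est : ∀ s ∈ Icc a b, ∀ t ∈ Icc a b,
      dist (inner ℝ (U s) (Φ s)) (inner ℝ (U t) (Φ t)) ≤
        dist (∫ v in a..s, G v) (∫ v in a..t, G v) := by
    intro s hs t ht
    rcases le_total s t with h | h
    · exact est0 s hs t ht h
    · rw [dist_comm, dist_comm (∫ v in a..s, G v)]; exact est0 t ht s hs h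
  have hFac : AbsolutelyContinuousOnInterval (fun t => (inner ℝ (U t) (Φ t) : ℝ)) a b := by
    rw [absolutelyContinuousOnInterval_iff] at hHac ⊢
    intro ε hε
    obtain ⟨δ, hδ, h⟩ := hHac ε hε
    refine ⟨δ, hδ, fun E hE hs => lt_of_le_of_lt (Finset.sum_le_sum fun i hi => ?_) (h E hE hs)⟩
    have := hE.1 i hi
    rw [uIcc_of_le hab.le] at this
    exact est _ this.1 _ this.2
  have hder : ∀ᵐ t, t ∈ uIoc a b →
      deriv (fun t => (inner ℝ (U t) (Φ t) : ℝ)) t = inner ℝ (U t) (Φ' t) + inner ℝ (f t) (Φ t) := by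
    have hb' : ∀ᵐ t, t ≠ b := by simp [ae_iff, measure_singleton]
    filter_upwards [hf.ae_hasDerivAt_integral, hb'] with t h1 htb ht
    rw [uIoc_of_le hab.le] at ht
    have htI : t ∈ Ioo a b := ⟨ht.1, lt_of_le_of_ne ht.2 htb⟩
    have h2 := h1 (by rw [uIcc_of_le hab.le]; exact Ioo_subset_Icc_self htI) a left_mem_uIcc
    have h3 : HasDerivAt U (f t) t := by
      refine (h2.const_add (U a)).congr_of_eventuallyEq ?_
      filter_upwards [Ioo_mem_nhds htI.1 htI.2] with y hy
      exact hU y (Ioo_subset_Icc_self hy)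
    exact (HasDerivAt.inner ℝ h3 (hΦ t)).deriv
  constructor
  · refine hFac.intervalIntegrable_deriv.congr_ae ?_
    exact (ae_restrict_iff' measurableSet_uIoc).2 hder
  · rw [← intervalIntegral.integral_congr_ae hder, hFac.integral_deriv_eq_sub, ha, hb]
    simp

/-- spatial integration by parts -/
lemma space_ibp {v w : Hsp} (h : InDomainA v w) {p p' p'' : ℝ → ℝ} {α β : ℝ}
    (hα : 0 < α) (hαβ : α < β) (hβ : β < 1)
    (hp : ∀ x, HasDerivAt p (p' x) x) (hp' : ∀ x, HasDerivAt p' (p'' x) x)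
    (hc : Continuous p'')
    (z : ∀ x, x ∉ Ioo α β → p x = 0) (z' : ∀ x, x ∉ Ioo α β → p' x = 0)
    (z'' : ∀ x, x ∉ Ioo α β → p'' x = 0) :
    ∫ x, v x * p'' x ∂μ01 = ∫ x, w x * p x ∂μ01 := by
  obtain ⟨vt, -, -, -, hae, g, hd, hg⟩ := h
  have sub : ∀ x ∈ Icc α β, x ∈ Ioo (0:ℝ) 1 := fun x hx =>
    ⟨hα.trans_le hx.1, hx.2.trans_lt hβ⟩
  have hαI : α ∈ Icc α β := left_mem_Icc.2 hαβ.le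
  have nα : α ∉ Ioo α β := by simp
  have nβ : β ∉ Ioo α β := by simp
  have hwi : IntervalIntegrable (w : ℝ → ℝ) volume α β :=
    intervalIntegrable_Hsp w hα.le hαβ.le hβ.le
  have hgU : ∀ t ∈ Icc α β, g t = g α + ∫ s in α..t, w s := by
    intro t ht
    rw [← hg t (sub t ht) α (sub α hαI)]; ring
  have hgc : ContinuousOn g (Icc α β) := by
    have h1 := intervalIntegral.continuousOn_primitive_interval' hwi left_mem_uIcc
    rw [uIcc_of_le hαβ.le] at h1
    exact (continuousOn_const.add h1).congr hgU
  have hgi : IntervalIntegrable g volume α β := by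
    refine ContinuousOn.intervalIntegrable ?_
    rwa [uIcc_of_le hαβ.le]
  have hvU : ∀ t ∈ Icc α β, vt t = vt α + ∫ s in α..t, g s := by
    intro t ht
    rw [intervalIntegral.integral_eq_sub_of_hasDerivAt]
    · ring
    · intro x hx
      rw [uIcc_of_le ht.1] at hx
      exact hd x (sub x ⟨hx.1, hx.2.trans ht.2⟩)
    · refine ContinuousOn.intervalIntegrable (hgc.mono ?_)
      rw [uIcc_of_le ht.1]
      exact Icc_subset_Icc_right ht.2
  have hp'c : Continuous p' := continuous_iff_continuousAt.2 fun t => (hp' t).continuousAt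
  have hpc : Continuous p := continuous_iff_continuousAt.2 fun t => (hp t).continuousAt
  have hvc : ContinuousOn vt (Icc α β) := fun x hx =>
    (hd x (sub x hx)).continuousAt.continuousWithinAt
  have A := (ibp hαβ hgi hvU hp' hc (z' _ nα) (z' _ nβ)).2
  have B := (ibp hαβ hwi hgU hp hp'c (z _ nα) (z _ nβ)).2
  have i1 : IntervalIntegrable (fun x => vt x * p'' x) volume α β := by
    refine ContinuousOn.intervalIntegrable ?_
    rw [uIcc_of_le hαβ.le]
    exact hvc.mul hc.continuousOn
  have i2 : IntervalIntegrable (fun x => g x * p' x) volume α β := by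
    refine ContinuousOn.intervalIntegrable ?_
    rw [uIcc_of_le hαβ.le]
    exact hgc.mul hp'c.continuousOn
  have i3 : IntervalIntegrable (fun x => w x * p x) volume α β :=
    hwi.mul_continuousOn hpc.continuousOn
  have hin : ∀ a b : ℝ, inner ℝ a b = a * b := fun a b => by simp [mul_comm]
  simp only [hin] at A B
  rw [intervalIntegral.integral_add i1 i2] at A
  rw [intervalIntegral.integral_add i2 i3] at B
  have red : ∀ q : ℝ → ℝ, (∀ x, x ∉ Ioo α β → q x = 0) →
      ∫ x, q x ∂μ01 = ∫ x in α..β, q x := by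
    intro q hq
    rw [intervalIntegral.integral_of_le hαβ.le]
    unfold μ01
    refine setIntegral_eq_of_subset_of_forall_sdiff_eq_zero measurableSet_Ioo
      (fun x hx => sub x ⟨hx.1.le, hx.2⟩) ?_
    intro x hx
    exact hq x fun h => hx.2 ⟨h.1, h.2.le⟩
  have c1 : ∫ x, v x * p'' x ∂μ01 = ∫ x, vt x * p'' x ∂μ01 := by
    refine integral_congr_ae ?_
    filter_upwards [hae] with x hx
    rw [hx]
  rw [c1, red _ (fun x hx => by rw [z'' x hx, mul_zero]),
    red _ (fun x hx => by rw [z x hx, mul_zero])]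
  linarith

lemma Lp_deriv {ψ ψt : ℝ × ℝ → ℝ}
    (hd : ∀ t x, HasDerivAt (fun s => ψ (s, x)) (ψt (t, x)) t) (huc : UniformContinuous ψt)
    (hm : ∀ t, MemLp (fun x => ψ (t, x)) 2 μ01) (hm' : ∀ t, MemLp (fun x => ψt (t, x)) 2 μ01) :
    (∀ t, HasDerivAt (fun t => ((hm t).toLp _ : Hsp)) ((hm' t).toLp _) t) ∧
    Continuous (fun t => ((hm' t).toLp _ : Hsp)) := by
  set M : ℝ := (measureUnivNNReal μ01 : ℝ) ^ (2:ENNReal).toReal⁻¹ with hM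
  have hM0 : 0 ≤ M := by positivity
  have unif : ∀ ε > 0, ∃ δ > 0, ∀ s t x, |s - t| < δ → |ψt (s, x) - ψt (t, x)| < ε := by
    intro ε hε
    obtain ⟨δ, hδ, h⟩ := Metric.uniformContinuous_iff.1 huc ε hε
    refine ⟨δ, hδ, fun s t x hst => ?_⟩
    have := @h (s, x) (t, x) (by simpa [Prod.dist_eq, Real.dist_eq, hδ] using hst)
    rwa [Real.dist_eq] at this
  constructor
  · intro t
    rw [hasDerivAt_iff_isLittleO, Asymptotics.isLittleO_iff]
    intro c hc
    obtain ⟨δ, hδ, h⟩ := unif (c / (M + 1)) (by positivity)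
    filter_upwards [Metric.ball_mem_nhds t hδ] with s hs
    have hpt : ∀ x, ‖ψ (s, x) - ψ (t, x) - (s - t) * ψt (t, x)‖ ≤ c / (M + 1) * ‖s - t‖ := by
      intro x
      have h1 : ∀ y ∈ Metric.ball t δ, HasDerivWithinAt (fun y => ψ (y, x) - y * ψt (t, x))
          (ψt (y, x) - 1 * ψt (t, x)) (Metric.ball t δ) y := fun y _ =>
        ((hd y x).sub ((hasDerivAt_id y).mul_const _)).hasDerivWithinAt
      have h2 : ∀ y ∈ Metric.ball t δ, ‖ψt (y, x) - 1 * ψt (t, x)‖ ≤ c / (M + 1) := by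
        intro y hy
        rw [one_mul]
        exact (h y t x (by simpa [Real.dist_eq] using hy)).le
      have h3 := Convex.norm_image_sub_le_of_norm_hasDerivWithin_le h1 h2 (convex_ball t δ)
        (Metric.mem_ball_self hδ) hs
      have e : ψ (s, x) - ψ (t, x) - (s - t) * ψt (t, x) =
          (ψ (s, x) - s * ψt (t, x)) - (ψ (t, x) - t * ψt (t, x)) := by ring
      rw [e]
      exact h3
    have hb : ∀ᵐ x ∂μ01, ‖(((hm s).toLp _ - (hm t).toLp _ - (s - t) • (hm' t).toLp _ : Hsp) : ℝ → ℝ) x‖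
        ≤ c / (M + 1) * ‖s - t‖ := by
      filter_upwards [Lp.coeFn_sub ((hm s).toLp _ - (hm t).toLp _) ((s - t) • (hm' t).toLp _),
        Lp.coeFn_sub ((hm s).toLp _) ((hm t).toLp _), Lp.coeFn_smul (s - t) ((hm' t).toLp _),
        (hm s).coeFn_toLp, (hm t).coeFn_toLp, (hm' t).coeFn_toLp] with x a1 a2 a3 a4 a5 a6
      rw [a1, Pi.sub_apply, a2, Pi.sub_apply, a3, Pi.smul_apply, a4, a5, a6, smul_eq_mul]
      exact hpt x
    refine (Lp.norm_le_of_ae_bound (by positivity) hb).trans ?_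
    rw [← hM, ← mul_assoc]
    refine mul_le_mul_of_nonneg_right ?_ (norm_nonneg _)
    rw [mul_div_assoc', div_le_iff₀ (by positivity)]
    nlinarith
  · rw [Metric.continuous_iff]
    intro t ε hε
    obtain ⟨δ, hδ, h⟩ := unif (ε / (M + 1)) (by positivity)
    refine ⟨δ, hδ, fun s hs => ?_⟩
    rw [dist_eq_norm]
    have hb : ∀ᵐ x ∂μ01, ‖(((hm' s).toLp _ - (hm' t).toLp _ : Hsp) : ℝ → ℝ) x‖ ≤ ε / (M + 1) := by
      filter_upwards [Lp.coeFn_sub ((hm' s).toLp _) ((hm' t).toLp _),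
        (hm' s).coeFn_toLp, (hm' t).coeFn_toLp] with x a1 a2 a3
      rw [a1, Pi.sub_apply, a2, a3]
      exact (h s t x (by simpa [Real.dist_eq] using hs)).le
    refine (Lp.norm_le_of_ae_bound (by positivity) hb).trans_lt ?_
    rw [← hM, mul_div_assoc', div_lt_iff₀ (by positivity)]
    nlinarith

lemma shrink {S : Set ℝ} (hS : IsCompact S) {a b : ℝ} (hab : a < b) (h : S ⊆ Ioo a b) :
    ∃ c d, a < c ∧ c < d ∧ d < b ∧ S ⊆ Ioo c d := by
  rcases S.eq_empty_or_nonempty with rfl | hne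
  · exact ⟨a + (b - a) / 3, a + 2 * (b - a) / 3, by linarith, by linarith, by linarith,
      empty_subset _⟩
  · have h1 := h (hS.sInf_mem hne)
    have h2 := h (hS.sSup_mem hne)
    have h3 : sInf S ≤ sSup S := csInf_le hS.bddBelow (hS.sSup_mem hne)
    refine ⟨(a + sInf S) / 2, (b + sSup S) / 2, by linarith [h1.1], by linarith [h1.1, h2.2],
      by linarith [h2.2], fun x hx => ⟨?_, ?_⟩⟩
    · linarith [csInf_le hS.bddBelow hx, h1.1]
    · linarith [le_csSup hS.bddAbove hx, h2.2]

lemma inner_toLp (v : Hsp) {q : ℝ → ℝ} (hq : MemLp q 2 μ01) :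
    inner ℝ v (hq.toLp q : Hsp) = ∫ x, v x * q x ∂μ01 := by
  rw [L2.inner_def]
  refine integral_congr_ae ?_
  filter_upwards [hq.coeFn_toLp] with x hx
  simp [hx, mul_comm]

lemma integrable_mul_toLp (v : Hsp) {q : ℝ → ℝ} (hq : MemLp q 2 μ01) :
    Integrable (fun x => v x * q x) μ01 := by
  refine (L2.integrable_inner (𝕜 := ℝ) v (hq.toLp q)).congr ?_
  filter_upwards [hq.coeFn_toLp] with x hx
  simp [hx, mul_comm]

lemma memLp_slice {ψ : ℝ × ℝ → ℝ} (hc : Continuous ψ) (hs : HasCompactSupport ψ) (t : ℝ) :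
    MemLp (fun x => ψ (t, x)) 2 μ01 := by
  obtain ⟨C, hC⟩ := hc.bounded_above_of_compact_support hs
  exact MemLp.of_bound (by fun_prop) C (Eventually.of_forall fun x => hC _)

lemma slice_t {ψ : ℝ × ℝ → ℝ} (h : Differentiable ℝ ψ) (t x : ℝ) :
    HasDerivAt (fun s => ψ (s, x)) (fderiv ℝ ψ (t, x) (1, 0)) t :=
  (h (t, x)).hasFDerivAt.comp_hasDerivAt t ((hasDerivAt_id t).prodMk (hasDerivAt_const t x))

lemma slice_x {ψ : ℝ × ℝ → ℝ} (h : Differentiable ℝ ψ) (t x : ℝ) :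
    HasDerivAt (fun s => ψ (t, s)) (fderiv ℝ ψ (t, x) (0, 1)) x :=
  (h (t, x)).hasFDerivAt.comp_hasDerivAt x ((hasDerivAt_const x t).prodMk (hasDerivAt_id x))

lemma tsupport_fderiv_app (ψ : ℝ × ℝ → ℝ) (v : ℝ × ℝ) :
    tsupport (fun p => fderiv ℝ ψ p v) ⊆ tsupport ψ := by
  refine closure_minimal ?_ (isClosed_tsupport ψ)
  intro p hp
  apply tsupport_fderiv_subset ℝ (f := ψ)
  apply subset_tsupport
  intro h0
  apply hp
  simp [h0]

lemma distr {b ω : ℝ → ℝ} {τ : ℝ} {u r u' uxx : ℝ → Hsp}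
    (hsol : IsStrongSolutionWith b ω τ u r u' uxx)
    (hr : ∀ᵐ t ∂(volume.restrict (Ioi τ)), ∀ᵐ x ∂μ01, 0 ≤ r t x)
    (ψ : ℝ × ℝ → ℝ) (hψ : ContDiff ℝ (⊤ : ℕ∞) ψ) (hcs : HasCompactSupport ψ)
    (hsub : tsupport ψ ⊆ Ioi τ ×ˢ Ioo (0:ℝ) 1) (hpos : ∀ p, 0 ≤ ψ p) :
    0 ≤ ∫ t in Ioi τ, ∫ x in Ioo (0:ℝ) 1,
      u t x * (-(deriv (fun s => ψ (s, x)) t) - iteratedDeriv 2 (fun y => ψ (t, y)) x) := by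
  set ψt : ℝ × ℝ → ℝ := fun p => fderiv ℝ ψ p (1, 0) with hψt
  set ψx : ℝ × ℝ → ℝ := fun p => fderiv ℝ ψ p (0, 1) with hψx
  set ψxx : ℝ × ℝ → ℝ := fun p => fderiv ℝ ψx p (0, 1) with hψxx
  have cd1 : ContDiff ℝ (⊤ : ℕ∞) (fderiv ℝ ψ) := hψ.fderiv_right (by simp)
  have cdt : ContDiff ℝ (⊤ : ℕ∞) ψt := cd1.clm_apply contDiff_const
  have cdx : ContDiff ℝ (⊤ : ℕ∞) ψx := cd1.clm_apply contDiff_const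
  have cdxx : ContDiff ℝ (⊤ : ℕ∞) ψxx :=
    (cdx.fderiv_right (m := (⊤ : ℕ∞)) (by simp)).clm_apply contDiff_const
  have st : tsupport ψt ⊆ tsupport ψ := tsupport_fderiv_app ψ _
  have sx : tsupport ψx ⊆ tsupport ψ := tsupport_fderiv_app ψ _
  have sxx : tsupport ψxx ⊆ tsupport ψ := (tsupport_fderiv_app ψx _).trans sx
  have hct : HasCompactSupport ψt := hcs.of_isClosed_subset (isClosed_tsupport _) st
  have hcxx : HasCompactSupport ψxx := hcs.of_isClosed_subset (isClosed_tsupport _) sxx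
  have dψ : Differentiable ℝ ψ := hψ.differentiable (by simp)
  have dψx : Differentiable ℝ ψx := cdx.differentiable (by simp)
  have et : ∀ t x, deriv (fun s => ψ (s, x)) t = ψt (t, x) := fun t x => (slice_t dψ t x).deriv
  have exx : ∀ t x, iteratedDeriv 2 (fun y => ψ (t, y)) x = ψxx (t, x) := by
    intro t x
    rw [iteratedDeriv_succ, iteratedDeriv_one]
    have : deriv (fun y => ψ (t, y)) = fun y => ψx (t, y) :=
      funext fun y => (slice_x dψ t y).deriv
    rw [this]
    exact (slice_x dψx t x).deriv
  have hK : IsCompact (tsupport ψ) := hcs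
  -- boxes
  obtain ⟨T1, T2, hT1, hT12, hTS⟩ : ∃ T1 T2, τ < T1 ∧ T1 < T2 ∧
      Prod.fst '' tsupport ψ ⊆ Ioo T1 T2 := by
    have hc1 := hK.image continuous_fst
    obtain ⟨B, hB⟩ := hc1.bddAbove
    obtain ⟨c, d, h1, h2, -, h4⟩ := shrink hc1 (a := τ) (b := max B τ + 1)
      (by linarith [le_max_right B τ]) (by
        intro y hy
        refine ⟨?_, by linarith [hB hy, le_max_left B τ]⟩
        obtain ⟨p, hp, rfl⟩ := hy
        exact (hsub hp).1)
    exact ⟨c, d, h1, h2, h4⟩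
  obtain ⟨α, β, hα, hαβ, hβ, hXS⟩ := shrink (hK.image continuous_snd) (zero_lt_one (α := ℝ)) (by
    rintro y ⟨p, hp, rfl⟩
    exact (hsub hp).2)
  have zt : ∀ {q : ℝ × ℝ → ℝ}, tsupport q ⊆ tsupport ψ → ∀ t x, t ∉ Ioo T1 T2 → q (t, x) = 0 := by
    intro q hq t x ht
    exact image_eq_zero_of_notMem_tsupport fun h => ht (hTS ⟨_, hq h, rfl⟩)
  have zx : ∀ {q : ℝ × ℝ → ℝ}, tsupport q ⊆ tsupport ψ → ∀ t x, x ∉ Ioo α β → q (t, x) = 0 := by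
    intro q hq t x hx
    exact image_eq_zero_of_notMem_tsupport fun h => hx (hXS ⟨_, hq h, rfl⟩)
  have hm := memLp_slice hψ.continuous hcs
  have hmt := memLp_slice cdt.continuous hct
  have hmxx := memLp_slice cdxx.continuous hcxx
  obtain ⟨hΦ, hΦ'⟩ := Lp_deriv (ψt := ψt) (fun t x => slice_t dψ t x)
    (hct.uniformContinuous_of_continuous cdt.continuous) hm hmt
  have z0 : ∀ {q : ℝ × ℝ → ℝ} (hq : tsupport q ⊆ tsupport ψ)
      (hmq : ∀ t, MemLp (fun x => q (t, x)) 2 μ01), ∀ t, t ∉ Ioo T1 T2 →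
      ((hmq t).toLp _ : Hsp) = 0 := by
    intro q hq hmq t ht
    have : (fun x => q (t, x)) = 0 := funext fun x => zt hq t x ht
    rw [MemLp.toLp_congr (hmq t) (MemLp.zero (p := 2) (μ := μ01) (ε := ℝ)) (by rw [this])]
    exact MemLp.toLp_zero _
  obtain ⟨hui, hu⟩ := hsol.fund T1 T2 hT1 hT12
  obtain ⟨hAi, hA0⟩ := ibp hT12 hui hu hΦ hΦ' (z0 le_rfl hm T1 (by simp)) (z0 le_rfl hm T2 (by simp))
  set A : ℝ → ℝ := fun t => inner ℝ (u t) ((hmt t).toLp _ : Hsp) +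
    inner ℝ (u' t) ((hm t).toLp _ : Hsp) with hA
  have hAz : ∀ t, t ∉ Ioo T1 T2 → A t = 0 := by
    intro t ht
    simp only [hA]
    rw [z0 st hmt t ht, z0 le_rfl hm t ht, inner_zero_right, inner_zero_right, add_zero]
  have hAint : IntegrableOn A (Ioi τ) := by
    have h1 : IntegrableOn A (Ioc T1 T2) := (intervalIntegrable_iff_integrableOn_Ioc_of_le hT12.le).1 hAi
    refine (h1.of_forall_sdiff_eq_zero measurableSet_Ioi ?_)
    intro t ht
    exact hAz t fun h => ht.2 ⟨h.1, h.2.le⟩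
  have hAint0 : ∫ t in Ioi τ, A t = 0 := by
    rw [setIntegral_eq_of_subset_of_forall_sdiff_eq_zero (s := Ioc T1 T2) measurableSet_Ioi
      (fun x hx => hT1.trans hx.1) (fun t ht => hAz t fun h => ht.2 ⟨h.1, h.2.le⟩),
      ← intervalIntegral.integral_of_le hT12.le, hA0]
  set B : ℝ → ℝ := fun t => inner ℝ (r t) ((hm t).toLp _ : Hsp) with hB
  have hB0 : ∀ᵐ t ∂(volume.restrict (Ioi τ)), 0 ≤ B t := by
    filter_upwards [hr] with t ht
    simp only [hB]
    rw [inner_toLp]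
    refine integral_nonneg_of_ae ?_
    filter_upwards [ht] with x hx
    exact mul_nonneg hx (hpos _)
  have hI : (fun t => ∫ x in Ioo (0:ℝ) 1,
      u t x * (-(deriv (fun s => ψ (s, x)) t) - iteratedDeriv 2 (fun y => ψ (t, y)) x))
      =ᵐ[volume.restrict (Ioi τ)] fun t => B t - A t := by
    filter_upwards [hsol.dom, hsol.eq] with t h1 h2
    simp only [et, exx]
    change ∫ x, u t x * (-ψt (t, x) - ψxx (t, x)) ∂μ01 = _
    have e1 : ∀ x, u t x * (-ψt (t, x) - ψxx (t, x)) =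
        -(u t x * ψt (t, x)) - u t x * ψxx (t, x) := fun x => by ring
    simp only [e1]
    have hneg : Integrable (fun x => -(u t x * ψt (t, x))) μ01 :=
      (integrable_mul_toLp (u t) (hmt t)).neg
    rw [integral_sub hneg (integrable_mul_toLp (u t) (hmxx t)),
      integral_neg]
    rw [space_ibp h1 hα hαβ hβ (p := fun x => ψ (t, x)) (p' := fun x => ψx (t, x))
      (p'' := fun x => ψxx (t, x)) (fun x => slice_x dψ t x) (fun x => slice_x dψx t x)
      (by have := cdxx.continuous; fun_prop) (zx le_rfl t) (zx sx t) (zx sxx t)]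
    rw [← inner_toLp (u t) (hmt t), ← inner_toLp (uxx t) (hm t)]
    simp only [hA, hB]
    rw [h2, inner_add_left]
    ring
  rw [integral_congr_ae hI]
  by_cases hBi : IntegrableOn B (Ioi τ)
  · rw [integral_sub hBi hAint, hAint0, sub_zero]
    exact integral_nonneg_of_ae hB0
  · rw [integral_undef]
    intro h
    apply hBi
    have := h.add hAint
    refine this.congr (Eventually.of_forall fun t => ?_)
    simp

/-- if `u` is a non-negative strong solution of the inclusion, then
`∂u/∂t − ∂²u/∂x² ≥ 0` for a.a. `t > τ` and a.a. `x ∈ (0,1)`, and consequently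
`∂u/∂t − ∂²u/∂x² ≥ 0` in the sense of distributions on `(τ,∞)×(0,1)`. -/
theorem statement0
    (b ω : ℝ → ℝ) (b0 b1 ω0 ω1 τ : ℝ) (hC : Cond1 b ω b0 b1 ω0 ω1)
    (uτ : Hsp) (u r u' uxx : ℝ → Hsp)
    (hsol : IsStrongSolutionWith b ω τ u r u' uxx)
    (hinit : u τ = uτ)
    (hnneg : NonnegOn u τ) :
    (∀ᵐ t ∂(volume.restrict (Ioi τ)), ∀ᵐ x ∂μ01, 0 ≤ u' t x - uxx t x) ∧
    (∀ φ : ℝ → ℝ → ℝ,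
      ContDiff ℝ (⊤ : ℕ∞) (fun p : ℝ × ℝ => φ p.1 p.2) →
      HasCompactSupport (fun p : ℝ × ℝ => φ p.1 p.2) →
      tsupport (fun p : ℝ × ℝ => φ p.1 p.2) ⊆ Ioi τ ×ˢ Ioo (0:ℝ) 1 →
      (∀ t x, 0 ≤ φ t x) →
      0 ≤ ∫ t in Ioi τ, ∫ x in Ioo (0:ℝ) 1,
            u t x * (-(deriv (fun s => φ s x) t) - iteratedDeriv 2 (fun y => φ t y) x)) := by
  have hr := r_nonneg hC hsol hnneg
  refine ⟨?_, fun φ h1 h2 h3 h4 => distr hsol hr (fun p => φ p.1 p.2) h1 h2 h3 (fun p => h4 _ _)⟩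
  filter_upwards [hr, hsol.eq] with t ht he
  have hadd := Lp.coeFn_add (r t) (uxx t)
  rw [← he] at hadd
  filter_upwards [ht, hadd] with x a b
  rw [b, Pi.add_apply]
  linarith

end
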